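/- arXiv:2504.10120 — 5 statements merged into one kernel-verified Lean document; each statement's English description precedes it below -/
import Mathlib

section
/- Let Ω be a finite probability space, and let X : Ω → 𝒳 and Y : Ω → 𝒴 be random variables with 𝒳, 𝒴 finite and nonempty. Then for any function f : 𝒴 → 𝒵 into a finite set 𝒵, the average min-entropy satisfies H̃∞(X | Y) ≤ H̃∞(X | f(Y)). -/
open Finset Real

/-- Probability of an event `E` under the weight function `p` on a finite sample space. -/
noncomputable def pr {Ω : Type*} [Fintype Ω] (p : Ω → ℝ) (E : Set Ω) : ℝ :=
  ∑ ω, E.indicator p ω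

/-- `P[X = x]`. -/
noncomputable def prEq {Ω 𝒳 : Type*} [Fintype Ω] (p : Ω → ℝ) (X : Ω → 𝒳) (x : 𝒳) : ℝ :=
  pr p {ω | X ω = x}

/-- `P[X = x | Y = y]`, taken to be `0` when `P[Y = y] = 0`. -/
noncomputable def condProb {Ω 𝒳 𝒴 : Type*} [Fintype Ω]
    (p : Ω → ℝ) (X : Ω → 𝒳) (x : 𝒳) (Y : Ω → 𝒴) (y : 𝒴) : ℝ :=
  if prEq p Y y = 0 then 0 else pr p {ω | X ω = x ∧ Y ω = y} / prEq p Y y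

/-- Average min-entropy `H̃∞(X | Y)`. -/
noncomputable def avgMinEntropy {Ω 𝒳 𝒴 : Type*} [Fintype Ω]
    [Fintype 𝒳] [Nonempty 𝒳] [Fintype 𝒴]
    (p : Ω → ℝ) (X : Ω → 𝒳) (Y : Ω → 𝒴) : ℝ :=
  - Real.logb 2 (∑ y : 𝒴, prEq p Y y *
      (Finset.univ.sup' Finset.univ_nonempty fun x : 𝒳 => condProb p X x Y y))

/-- Min-entropy `H∞(X)`. -/
noncomputable def minEntropy {Ω 𝒳 : Type*} [Fintype Ω] [Fintype 𝒳] [Nonempty 𝒳]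
    (p : Ω → ℝ) (X : Ω → 𝒳) : ℝ :=
  - Real.logb 2 (Finset.univ.sup' Finset.univ_nonempty fun x : 𝒳 => prEq p X x)

theorem joint_le_prEq {Ω 𝒳 𝒴 : Type*} [Fintype Ω] (p : Ω → ℝ) (hp : ∀ ω, 0 ≤ p ω)
    (X : Ω → 𝒳) (x : 𝒳) (Y : Ω → 𝒴) (y : 𝒴) :
    pr p {ω | X ω = x ∧ Y ω = y} ≤ prEq p Y y := by
  unfold prEq pr
  refine Finset.sum_le_sum fun ω _ => ?_
  exact Set.indicator_le_indicator_of_subset (fun _ h => h.2) hp ω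

theorem pr_nonneg_aux {Ω : Type*} [Fintype Ω] (p : Ω → ℝ) (hp : ∀ ω, 0 ≤ p ω) (E : Set Ω) :
    0 ≤ pr p E :=
  Finset.sum_nonneg fun ω _ => Set.indicator_nonneg (fun ω _ => hp ω) ω

theorem prEq_mul_condProb {Ω 𝒳 𝒴 : Type*} [Fintype Ω] (p : Ω → ℝ) (hp : ∀ ω, 0 ≤ p ω)
    (X : Ω → 𝒳) (x : 𝒳) (Y : Ω → 𝒴) (y : 𝒴) :
    prEq p Y y * condProb p X x Y y = pr p {ω | X ω = x ∧ Y ω = y} := by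
  unfold condProb
  split_ifs with h
  · have h1 := joint_le_prEq p hp X x Y y
    have h2 := pr_nonneg_aux p hp {ω | X ω = x ∧ Y ω = y}
    rw [h] at h1
    rw [mul_zero]
    exact le_antisymm h2 h1
  · field_simp

theorem joint_le_term {Ω 𝒳 𝒴 : Type*} [Fintype Ω] [Fintype 𝒳] [Nonempty 𝒳]
    (p : Ω → ℝ) (hp : ∀ ω, 0 ≤ p ω) (X : Ω → 𝒳) (x : 𝒳) (Y : Ω → 𝒴) (y : 𝒴) :
    pr p {ω | X ω = x ∧ Y ω = y} ≤ prEq p Y y *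
      (Finset.univ.sup' Finset.univ_nonempty fun x : 𝒳 => condProb p X x Y y) := by
  rw [← prEq_mul_condProb p hp]
  exact mul_le_mul_of_nonneg_left
    (Finset.le_sup' (fun x : 𝒳 => condProb p X x Y y) (Finset.mem_univ x))
    (pr_nonneg_aux p hp _)

open Classical in
theorem joint_comp {Ω 𝒳 𝒴 𝒵 : Type*} [Fintype Ω] [Fintype 𝒴]
    (p : Ω → ℝ) (X : Ω → 𝒳) (x : 𝒳) (Y : Ω → 𝒴) (f : 𝒴 → 𝒵) (z : 𝒵) :
    pr p {ω | X ω = x ∧ f (Y ω) = z} =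
      ∑ y, if f y = z then pr p {ω | X ω = x ∧ Y ω = y} else 0 := by
  unfold pr
  have : ∀ y, (if f y = z then ∑ ω, Set.indicator {ω | X ω = x ∧ Y ω = y} p ω else 0)
      = ∑ ω, if Y ω = y then (if X ω = x ∧ f (Y ω) = z then p ω else 0) else 0 := by
    intro y
    split_ifs with h
    · refine Finset.sum_congr rfl fun ω _ => ?_
      simp only [Set.indicator_apply, Set.mem_setOf_eq]
      grind
    · symm
      refine Finset.sum_eq_zero fun ω _ => ?_
      grind
  simp_rw [this]
  rw [Finset.sum_comm]
  refine Finset.sum_congr rfl fun ω _ => ?_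
  simp [Set.indicator_apply]

theorem stmt_0 {Ω 𝒳 𝒴 𝒵 : Type*} [Fintype Ω]
    [Fintype 𝒳] [Nonempty 𝒳] [Fintype 𝒴] [Nonempty 𝒴] [Fintype 𝒵]
    (p : Ω → ℝ) (hp : ∀ ω, 0 ≤ p ω) (hsum : ∑ ω, p ω = 1)
    (X : Ω → 𝒳) (Y : Ω → 𝒴) (f : 𝒴 → 𝒵) :
    avgMinEntropy p X Y ≤ avgMinEntropy p X (fun ω => f (Y ω)) := by
  classical
  unfold avgMinEntropy
  have hnn : ∀ z, 0 ≤ prEq p (fun ω => f (Y ω)) z * (Finset.univ.sup' Finset.univ_nonempty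
      fun x : 𝒳 => condProb p X x (fun ω => f (Y ω)) z) := fun z =>
    (pr_nonneg_aux p hp _).trans (joint_le_term p hp X (Classical.arbitrary 𝒳) _ z)
  apply neg_le_neg
  apply Real.logb_le_logb_of_le (by norm_num)
  · obtain ⟨ω, hω⟩ : ∃ ω, 0 < p ω := by
      by_contra! h
      have := Finset.sum_nonpos (s := Finset.univ) fun ω _ => h ω
      linarith
    refine Finset.sum_pos' (fun z _ => hnn z) ⟨f (Y ω), Finset.mem_univ _, ?_⟩
    refine lt_of_lt_of_le ?_ (joint_le_term p hp X (X ω) (fun ω => f (Y ω)) (f (Y ω)))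
    refine Finset.sum_pos' (fun i _ => Set.indicator_nonneg (fun i _ => hp i) i)
      ⟨ω, Finset.mem_univ _, ?_⟩
    simpa [Set.indicator_apply] using hω
  · calc _ ≤ ∑ z : 𝒵, ∑ y : 𝒴, (if f y = z then prEq p Y y * (Finset.univ.sup'
            Finset.univ_nonempty fun x : 𝒳 => condProb p X x Y y) else 0) := by
          refine Finset.sum_le_sum fun z _ => ?_
          obtain ⟨x, -, hx⟩ := Finset.exists_mem_eq_sup' (Finset.univ_nonempty (α := 𝒳))
            (fun x : 𝒳 => condProb p X x (fun ω => f (Y ω)) z)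
          rw [hx, prEq_mul_condProb p hp, joint_comp]
          refine Finset.sum_le_sum fun y _ => ?_
          split_ifs
          · exact joint_le_term p hp X x Y y
          · exact le_rfl
      _ = _ := by
          rw [Finset.sum_comm]
          simp
end

section
/- Let Ω be a finite probability space, and let X : Ω → 𝒳, Y : Ω → 𝒴, Z : Ω → 𝒵 be random variables with 𝒳, 𝒴, 𝒵 finite and nonempty. If the pair (X, Y) is independent of Z, then H̃∞(X | (Y, Z)) = H̃∞(X | Y). -/
open Finset Real

theorem pr_sum_aux {Ω 𝒳 : Type*} [Fintype Ω] [Fintype 𝒳] (p : Ω → ℝ) (X : Ω → 𝒳) (E : Set Ω) :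
    ∑ x, pr p {ω | X ω = x ∧ ω ∈ E} = pr p E := by
  classical
  unfold pr
  rw [Finset.sum_comm]
  refine Finset.sum_congr rfl fun ω _ => ?_
  by_cases h : ω ∈ E <;> simp [Set.indicator_apply, h]

theorem stmt_1 {Ω 𝒳 𝒴 𝒵 : Type*} [Fintype Ω]
    [Fintype 𝒳] [Nonempty 𝒳] [Fintype 𝒴] [Nonempty 𝒴] [Fintype 𝒵] [Nonempty 𝒵]
    (p : Ω → ℝ) (hp : ∀ ω, 0 ≤ p ω) (hsum : ∑ ω, p ω = 1)
    (X : Ω → 𝒳) (Y : Ω → 𝒴) (Z : Ω → 𝒵)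
    (hindep : ∀ (x : 𝒳) (y : 𝒴) (z : 𝒵),
      prEq p (fun ω => (X ω, Y ω, Z ω)) (x, y, z) =
        prEq p (fun ω => (X ω, Y ω)) (x, y) * prEq p Z z) :
    avgMinEntropy p X (fun ω => (Y ω, Z ω)) = avgMinEntropy p X Y := by
  classical
  have hYZ : ∀ y z, prEq p (fun ω => (Y ω, Z ω)) (y, z) = prEq p Y y * prEq p Z z := by
    intro y z
    have h1 := pr_sum_aux p X {ω | (Y ω, Z ω) = (y, z)}
    have h2 := pr_sum_aux p X {ω | Y ω = y}
    unfold prEq at hindep ⊢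
    rw [← h1, ← h2, Finset.sum_mul]
    refine Finset.sum_congr rfl fun x _ => ?_
    have := hindep x y z
    simpa only [Prod.mk.injEq, Set.mem_setOf_eq] using this
  have hZ : ∑ z, prEq p Z z = 1 := by
    have h := pr_sum_aux p Z Set.univ
    simp only [Set.mem_univ, and_true] at h
    unfold prEq
    rw [h]
    simpa [pr] using hsum
  have hc : ∀ x y z, prEq p Z z ≠ 0 →
      condProb p X x (fun ω => (Y ω, Z ω)) (y, z) = condProb p X x Y y := by
    intro x y z hz
    have h := hindep x y z
    unfold condProb
    rw [hYZ]
    by_cases hy : prEq p Y y = 0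
    · simp [hy]
    · rw [if_neg (mul_ne_zero hy hz), if_neg hy]
      have h' : pr p {ω | X ω = x ∧ (Y ω, Z ω) = (y, z)} =
          pr p {ω | X ω = x ∧ Y ω = y} * prEq p Z z := by
        unfold prEq at h ⊢
        simpa only [Prod.mk.injEq] using h
      rw [h', mul_div_mul_right _ _ hz]
  unfold avgMinEntropy
  congr 2
  rw [Fintype.sum_prod_type]
  refine Finset.sum_congr rfl fun y _ => ?_
  rw [← mul_one (prEq p Y y * _), ← hZ, Finset.mul_sum]
  refine Finset.sum_congr rfl fun z _ => ?_
  rw [hYZ]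
  by_cases hz : prEq p Z z = 0
  · simp [hz]
  · simp only [hc _ _ _ hz]
    ring
end

section
/- Let Ω be a finite probability space, let X, Y : Ω → D be two random variables defined on the same finite nonempty set D, and let A : D → Set D assign to each d ∈ D a subset A(d) ⊆ D such that (i) the cardinality |A(d)| is the same number |A| for all d ∈ D, and (ii) ⋃_{d ∈ D} A(d) = D. Then P[X ∈ A(Y)] ≤ |A| · 2^{−H̃∞(X | Y)}. -/
open Finset Real

theorem aux_mul {Ω D : Type*} [Fintype Ω] (p : Ω → ℝ) (hp : ∀ ω, 0 ≤ p ω)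
    (X Y : Ω → D) (x y : D) :
    pr p {ω | X ω = x ∧ Y ω = y} = prEq p Y y * condProb p X x Y y := by
  unfold condProb
  split_ifs with h
  · rw [mul_zero]
    have h1 : pr p {ω | X ω = x ∧ Y ω = y} ≤ prEq p Y y := by
      unfold prEq pr
      refine Finset.sum_le_sum fun ω _ => ?_
      exact Set.indicator_le_indicator_of_subset (fun ω h => h.2) hp ω
    have h2 : 0 ≤ pr p {ω | X ω = x ∧ Y ω = y} :=
      Finset.sum_nonneg fun ω _ => Set.indicator_nonneg (fun ω _ => hp ω) ω
    linarith
  · field_simp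

theorem aux_bound {Ω D : Type*} [Fintype Ω] [Fintype D] [Nonempty D] [DecidableEq D]
    (p : Ω → ℝ) (hp : ∀ ω, 0 ≤ p ω)
    (X Y : Ω → D) (A : D → Finset D) (m : ℕ)
    (hcard : ∀ d : D, (A d).card = m) :
    pr p {ω | X ω ∈ A (Y ω)} ≤ (m : ℝ) * ∑ y : D, prEq p Y y *
      (Finset.univ.sup' Finset.univ_nonempty fun x : D => condProb p X x Y y) := by
  have h1 : pr p {ω | X ω ∈ A (Y ω)}
      = ∑ y : D, ∑ x ∈ A y, pr p {ω | X ω = x ∧ Y ω = y} := by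
    unfold pr
    simp_rw [Finset.sum_comm (s := A _)]
    rw [Finset.sum_comm]
    refine Finset.sum_congr rfl fun ω _ => ?_
    simp only [Set.indicator_apply, Set.mem_setOf_eq, ite_and]
    rw [Finset.sum_eq_single (Y ω)]
    · simp
    · intro b _ hb
      simp [hb.symm]
    · simp
  rw [h1, Finset.mul_sum]
  refine Finset.sum_le_sum fun y _ => ?_
  rw [← hcard y, ← nsmul_eq_mul]
  refine Finset.sum_le_card_nsmul _ _ _ fun x _ => ?_
  rw [aux_mul p hp]
  refine mul_le_mul_of_nonneg_left ?_ ?_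
  · exact Finset.le_sup' (fun x : D => condProb p X x Y y) (Finset.mem_univ x)
  · exact Finset.sum_nonneg fun ω _ => Set.indicator_nonneg (fun ω _ => hp ω) ω

theorem stmt_7 {Ω D : Type*} [Fintype Ω] [Fintype D] [Nonempty D] [DecidableEq D]
    (p : Ω → ℝ) (hp : ∀ ω, 0 ≤ p ω) (hsum : ∑ ω, p ω = 1)
    (X Y : Ω → D) (A : D → Finset D) (m : ℕ)
    (hcard : ∀ d : D, (A d).card = m)
    (hcover : ∀ x : D, ∃ d : D, x ∈ A d) :
    pr p {ω | X ω ∈ A (Y ω)} ≤ (m : ℝ) * (2 : ℝ) ^ (-(avgMinEntropy p X Y)) := by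
  have hb := aux_bound p hp X Y A m hcard
  have hu := aux_bound p hp X Y (fun _ => Finset.univ) (Fintype.card D) (fun _ => rfl)
  have h1 : pr p {ω | X ω ∈ (Finset.univ : Finset D)} = 1 := by
    simpa [pr] using hsum
  rw [h1] at hu
  unfold avgMinEntropy
  rw [neg_neg, Real.rpow_logb (by norm_num) (by norm_num)]
  · exact hb
  · by_contra hn
    have := mul_nonpos_of_nonneg_of_nonpos (Nat.cast_nonneg (α := ℝ) (Fintype.card D)) (not_lt.mp hn)
    linarith
end

section
/- Let d : ℕ → ℕ be a function such that d(n) · log₂(n) = o(n). Then the function n ↦ |B_n^{d(n)}| · 2^{−n} = (Σ_{k=0}^{d(n)−1} C(n, k)) · 2^{−n} is negligible: for every c ∈ ℕ there exists N such that for all n ≥ N, (Σ_{k=0}^{d(n)−1} C(n, k)) · 2^{−n} ≤ n^{−c}. -/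
open Finset Real

lemma sum_choose_le_pow (n d : ℕ) (hn : 2 ≤ n) :
    ∑ k ∈ Finset.range d, n.choose k ≤ n ^ d := by
  induction d with
  | zero => simp
  | succ d ih =>
    rw [Finset.sum_range_succ, pow_succ]
    have h1 := Nat.choose_le_pow n d
    nlinarith [Nat.mul_le_mul_left (n ^ d) hn]

theorem stmt_12 (d : ℕ → ℕ)
    (h : Filter.Tendsto (fun n : ℕ => ((d n : ℝ) * Real.logb 2 n) / n)
      Filter.atTop (nhds 0)) :
    ∀ c : ℕ, ∃ N : ℕ, ∀ n ≥ N,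
      ((∑ k ∈ Finset.range (d n), n.choose k : ℕ) : ℝ) * (2 : ℝ) ^ (-(n : ℝ)) ≤
        (n : ℝ) ^ (-(c : ℝ)) := by
  intro c
  have hlog : Filter.Tendsto (fun n : ℕ => (c : ℝ) * (Real.logb 2 n / n))
      Filter.atTop (nhds 0) := by
    have h1 : Filter.Tendsto (fun x : ℝ => Real.log x / x) Filter.atTop (nhds 0) :=
      Real.isLittleO_log_id_atTop.tendsto_div_nhds_zero
    have h2 := (h1.comp tendsto_natCast_atTop_atTop).const_mul ((c : ℝ) / Real.log 2)
    rw [mul_zero] at h2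
    refine h2.congr fun n => ?_
    simp only [Function.comp, Real.logb]
    ring
  have e1 := h.eventually_lt_const (show (0 : ℝ) < 1 / 2 by norm_num)
  have e2 := hlog.eventually_lt_const (show (0 : ℝ) < 1 / 2 by norm_num)
  obtain ⟨N, hN⟩ := Filter.eventually_atTop.1 (e1.and e2)
  refine ⟨max N 2, fun n hn => ?_⟩
  obtain ⟨h1, h2⟩ := hN n (le_trans (le_max_left _ _) hn)
  have hn2 : 2 ≤ n := le_trans (le_max_right _ _) hn
  have hpos : (0 : ℝ) < n := by exact_mod_cast (by omega : 0 < n)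
  rw [div_lt_iff₀ hpos] at h1
  rw [← mul_div_assoc, div_lt_iff₀ hpos] at h2
  have hb : (n : ℝ) = (2 : ℝ) ^ (Real.logb 2 n) :=
    (Real.rpow_logb (by norm_num) (by norm_num) hpos).symm
  have hS : ((∑ k ∈ Finset.range (d n), n.choose k : ℕ) : ℝ) ≤ (n : ℝ) ^ (d n : ℝ) := by
    rw [Real.rpow_natCast]
    exact_mod_cast sum_choose_le_pow n (d n) hn2
  have key : ∀ y : ℝ, (n : ℝ) ^ y = (2 : ℝ) ^ (Real.logb 2 n * y) := fun y => by
    rw [Real.rpow_mul (by norm_num), ← hb]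
  refine (mul_le_mul_of_nonneg_right hS (by positivity)).trans ?_
  rw [key, key, ← Real.rpow_add (by norm_num)]
  apply Real.rpow_le_rpow_of_exponent_le (by norm_num)
  nlinarith
end

section
/- Let Ω be a finite probability space, let k, l ≥ 1, and let R : Ω → (Fin k → (Fin l → Bool)) be a random variable whose j-th block R_j takes values in {0,1}^l. Let V : Ω → 𝒱 be a random variable on a finite nonempty set 𝒱, let J : Ω → Fin k be an arbitrary random index, and let g : 𝒱 × Fin k → (Fin l → Bool) be any function. Suppose that for every j ∈ Fin k the block R_j is uniformly distributed on {0,1}^l and is independent of V. Then P[ R_J = g(V, J) ] ≤ k² · 2^{−l}. -/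
open Finset Real

theorem stmt_14 {Ω 𝒱 : Type*} [Fintype Ω] [Fintype 𝒱] [Nonempty 𝒱]
    (k l : ℕ) (hk : 1 ≤ k) (hl : 1 ≤ l)
    (p : Ω → ℝ) (hp : ∀ ω, 0 ≤ p ω) (hsum : ∑ ω, p ω = 1)
    (R : Ω → (Fin k → (Fin l → Bool))) (V : Ω → 𝒱) (J : Ω → Fin k)
    (g : 𝒱 × Fin k → (Fin l → Bool))
    (hunif : ∀ (j : Fin k) (v : Fin l → Bool),
      prEq p (fun ω => R ω j) v = (2 : ℝ) ^ (-(l : ℝ)))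
    (hindep : ∀ (j : Fin k) (v : Fin l → Bool) (w : 𝒱),
      pr p {ω | R ω j = v ∧ V ω = w} =
        prEq p (fun ω => R ω j) v * prEq p V w) :
    pr p {ω | R ω (J ω) = g (V ω, J ω)} ≤ (k : ℝ) ^ 2 * (2 : ℝ) ^ (-(l : ℝ)) := by
  classical
  have hV : ∑ w, prEq p V w = 1 := by
    unfold prEq pr
    rw [Finset.sum_comm, ← hsum]
    refine Finset.sum_congr rfl fun ω _ => ?_
    simp [Set.indicator_apply]
  have hpos : (0 : ℝ) ≤ (2 : ℝ) ^ (-(l : ℝ)) := by positivity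
  have h1 : pr p {ω | R ω (J ω) = g (V ω, J ω)} ≤
      ∑ j : Fin k, ∑ w : 𝒱, pr p {ω | R ω j = g (w, j) ∧ V ω = w} := by
    unfold pr
    have h2 : ∑ j : Fin k, ∑ w : 𝒱, ∑ ω, ({ω | R ω j = g (w, j) ∧ V ω = w} : Set Ω).indicator p ω
        = ∑ ω, ∑ j : Fin k, ∑ w : 𝒱,
          ({ω | R ω j = g (w, j) ∧ V ω = w} : Set Ω).indicator p ω := by
      rw [Finset.sum_comm]
      rw [Finset.sum_congr rfl fun w _ => Finset.sum_comm]
      rw [Finset.sum_comm]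
      exact Finset.sum_congr rfl fun ω _ => Finset.sum_comm
    rw [h2]
    refine Finset.sum_le_sum fun ω _ => ?_
    have hn : ∀ (j : Fin k) (w : 𝒱),
        0 ≤ ({ω | R ω j = g (w, j) ∧ V ω = w} : Set Ω).indicator p ω :=
      fun j w => Set.indicator_nonneg (fun ω _ => hp ω) ω
    calc _ = ({ω' | R ω' (J ω) = g (V ω, J ω) ∧ V ω' = V ω} : Set Ω).indicator p ω := by
          simp [Set.indicator_apply]
      _ ≤ ∑ w : 𝒱, ({ω' | R ω' (J ω) = g (w, J ω) ∧ V ω' = w} : Set Ω).indicator p ω :=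
          Finset.single_le_sum
            (f := fun w => ({ω' | R ω' (J ω) = g (w, J ω) ∧ V ω' = w} : Set Ω).indicator p ω)
            (fun w _ => hn (J ω) w) (Finset.mem_univ (V ω))
      _ ≤ _ := Finset.single_le_sum
            (f := fun j => ∑ w : 𝒱,
              ({ω' | R ω' j = g (w, j) ∧ V ω' = w} : Set Ω).indicator p ω)
            (fun j _ => Finset.sum_nonneg fun w _ => hn j w) (Finset.mem_univ (J ω))
  refine h1.trans ?_
  simp only [hindep, hunif, ← Finset.mul_sum, hV, mul_one, Finset.sum_const, Finset.card_univ,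
    Fintype.card_fin, nsmul_eq_mul]
  refine mul_le_mul_of_nonneg_right ?_ hpos
  have : (1 : ℝ) ≤ k := by exact_mod_cast hk
  nlinarith
end
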